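/- arXiv:2404.18093 — 2 statements merged into one kernel-verified Lean document; each statement's English description precedes it below -/
import Mathlib

section
/- If f : X → ℝ is twice differentiable, λ-strongly convex, and satisfies ‖∇f(x)‖ ≤ G for all x ∈ X, then f is (λ/G²)-exp-concave on X, i.e., x ↦ exp(-(λ/G²)·f(x)) is concave on X. -/
open RealInnerProductSpace

theorem stmt_4 {d : ℕ} (X : Set (EuclideanSpace ℝ (Fin d))) (hX : Convex ℝ X)
    (f : EuclideanSpace ℝ (Fin d) → ℝ)
    (f' : EuclideanSpace ℝ (Fin d) → EuclideanSpace ℝ (Fin d))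
    (hf : ContDiff ℝ 2 f)
    (hdiff : ∀ x ∈ X, HasGradientAt f (f' x) x)
    (lam G : ℝ) (hlam : 0 < lam) (hG : 0 < G)
    (hsc : ∀ x ∈ X, ∀ y ∈ X,
      f y ≥ f x + ⟪f' x, y - x⟫ + lam / 2 * ‖x - y‖ ^ 2)
    (hgrad : ∀ x ∈ X, ‖f' x‖ ≤ G) :
    ConcaveOn ℝ X (fun x => Real.exp (-(lam / G ^ 2) * f x)) := by
  refine ⟨hX, ?_⟩
  intro x hx y hy a b ha hb hab
  set v := y - x with hv
  set p : ℝ → ℝ := fun t => f (x + t • v) with hp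
  have hpC : ContDiff ℝ 2 p := hf.comp (by fun_prop)
  have hmem : ∀ t ∈ Set.Icc (0:ℝ) 1, x + t • v ∈ X := by
    intro t ht
    exact hX.add_smul_sub_mem hx hy ht
  have hp1 : ∀ t, HasDerivAt p (deriv p t) t := fun t =>
    (hpC.differentiable (by norm_num) t).hasDerivAt
  have hpC1 : ContDiff ℝ 1 (deriv p) := by
    have h2 : ContDiff ℝ (1 + 1) p := by simpa [one_add_one_eq_two] using hpC
    exact (contDiff_succ_iff_deriv.1 h2).2.2
  have hp2 : ∀ t, HasDerivAt (deriv p) (deriv (deriv p) t) t := fun t =>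
    (hpC1.differentiable (by norm_num) t).hasDerivAt
  have hd : ∀ t ∈ Set.Icc (0:ℝ) 1, deriv p t = ⟪f' (x + t • v), v⟫ := by
    intro t ht
    have h1 := (hdiff _ (hmem t ht)).hasFDerivAt
    have h2 : HasDerivAt (fun t : ℝ => x + t • v) v t := by
      simpa using ((hasDerivAt_id t).smul_const v).const_add x
    have h3 := h1.comp_hasDerivAt t h2
    have h4 : deriv p t = _ := h3.deriv
    rw [h4]
    simp
  have hsc' : ∀ s ∈ Set.Icc (0:ℝ) 1, ∀ t ∈ Set.Icc (0:ℝ) 1,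
      p t ≥ p s + (t - s) * deriv p s + lam / 2 * ((t - s) ^ 2 * ‖v‖ ^ 2) := by
    intro s hs t ht
    have h := hsc _ (hmem s hs) _ (hmem t ht)
    have e1 : (x + t • v) - (x + s • v) = (t - s) • v := by rw [sub_smul]; abel
    rw [norm_sub_rev, e1, inner_smul_right, norm_smul, mul_pow, Real.norm_eq_abs, sq_abs,
      ← hd s hs] at h
    exact h
  have hmono : MonotoneOn (fun t => deriv p t - lam * ‖v‖ ^ 2 * t) (Set.Icc (0:ℝ) 1) := by
    intro s hs t ht hst
    rcases hst.eq_or_lt with rfl | hlt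
    · exact le_rfl
    have h1 := hsc' s hs t ht
    have h2 := hsc' t ht s hs
    have h3 : 0 ≤ (t - s) * ((deriv p t - lam * ‖v‖ ^ 2 * t) - (deriv p s - lam * ‖v‖ ^ 2 * s)) := by
      nlinarith
    have := nonneg_of_mul_nonneg_right h3 (sub_pos.2 hlt)
    simpa using this
  have hsec : ∀ t ∈ Set.Ioo (0:ℝ) 1, lam * ‖v‖ ^ 2 ≤ deriv (deriv p) t := by
    intro t ht
    have h1 : HasDerivAt (fun t => deriv p t - lam * ‖v‖ ^ 2 * t)
        (deriv (deriv p) t - lam * ‖v‖ ^ 2) t := by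
      have h0 := (hp2 t).sub ((hasDerivAt_id t).const_mul (lam * ‖v‖ ^ 2))
      rw [mul_one] at h0
      exact h0
    have h2 := hmono.derivWithin_nonneg (x := t)
    rw [derivWithin_of_mem_nhds (Icc_mem_nhds ht.1 ht.2), h1.deriv] at h2
    linarith
  set α := lam / G ^ 2 with hα
  have hαpos : 0 < α := by positivity
  have hg1 : ∀ t, HasDerivAt (fun t => Real.exp (-α * p t))
      (Real.exp (-α * p t) * (-α * deriv p t)) t := fun t =>
    ((hp1 t).const_mul (-α)).exp
  have hg2 : ∀ t, HasDerivAt (fun t => Real.exp (-α * p t) * (-α * deriv p t))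
      (Real.exp (-α * p t) * (-α * deriv p t) * (-α * deriv p t)
        + Real.exp (-α * p t) * (-α * deriv (deriv p) t)) t := fun t =>
    (hg1 t).mul ((hp2 t).const_mul (-α))
  have hconc : ConcaveOn ℝ (Set.Icc (0:ℝ) 1) (fun t => Real.exp (-α * p t)) := by
    refine concaveOn_of_hasDerivWithinAt2_nonpos (convex_Icc 0 1)
      (fun t _ => (hg1 t).continuousAt.continuousWithinAt)
      (fun t _ => (hg1 t).hasDerivWithinAt) (fun t _ => (hg2 t).hasDerivWithinAt) ?_
    intro t ht
    rw [interior_Icc] at ht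
    have htI := Set.Ioo_subset_Icc_self ht
    have h1 := hsec t ht
    have h2 : |deriv p t| ≤ G * ‖v‖ := by
      rw [hd t htI]
      exact (abs_real_inner_le_norm _ _).trans
        (mul_le_mul_of_nonneg_right (hgrad _ (hmem t htI)) (norm_nonneg _))
    have h3 : (deriv p t) ^ 2 ≤ (G * ‖v‖) ^ 2 := by
      rw [← sq_abs]; gcongr
    have h4 : α * (deriv p t) ^ 2 ≤ lam * ‖v‖ ^ 2 := by
      calc α * (deriv p t) ^ 2 ≤ α * (G * ‖v‖) ^ 2 := by gcongr
        _ = lam * ‖v‖ ^ 2 := by rw [hα]; field_simp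
    have h5 : 0 ≤ Real.exp (-α * p t) * α * (deriv (deriv p) t - α * (deriv p t) ^ 2) :=
      mul_nonneg (by positivity) (by linarith)
    nlinarith
  have key := hconc.2 (Set.left_mem_Icc.2 zero_le_one) (Set.right_mem_Icc.2 zero_le_one) ha hb hab
  have e : a • x + b • y = x + b • v := by
    rw [hv, smul_sub]
    obtain rfl : a = 1 - b := by linarith
    rw [sub_smul, one_smul]; abel
  simp only [hp, smul_eq_mul, mul_zero, mul_one, zero_add, zero_smul, add_zero, one_smul] at key
  have e2 : x + v = y := by rw [hv]; abel
  rw [e2] at key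
  simpa [e] using key
end

section
/- Let A ⪰ B ≻ 0 be positive definite d×d real matrices. Then tr(A⁻¹(A - B)) ≤ log(det A / det B). -/
open scoped MatrixOrder in
theorem aux_factor {d : ℕ} (A : Matrix (Fin d) (Fin d) ℝ) (hA : A.PosDef) :
    ∃ C : Matrix (Fin d) (Fin d) ℝ, A = C.conjTranspose * C := by
  have h : (0 : Matrix (Fin d) (Fin d) ℝ) ≤ A := Matrix.nonneg_iff_posSemidef.mpr hA.posSemidef
  obtain ⟨C, hC⟩ := CStarAlgebra.nonneg_iff_eq_star_mul_self.mp h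
  exact ⟨C, hC⟩

theorem stmt_7 {d : ℕ} (A B : Matrix (Fin d) (Fin d) ℝ)
    (hB : B.PosDef) (hAB : (A - B).PosSemidef) (hA : A.PosDef) :
    (A⁻¹ * (A - B)).trace ≤ Real.log (A.det / B.det) := by
  obtain ⟨C, hC⟩ := aux_factor A⁻¹ hA.inv
  have hdA := hA.det_pos
  have hdB := hB.det_pos
  have hdet : A.det⁻¹ = C.det * C.det := by
    have := congrArg Matrix.det hC
    rw [Matrix.det_mul, Matrix.det_conjTranspose, Matrix.det_nonsing_inv] at this
    simpa using this
  have hCd : C.det ≠ 0 := by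
    intro h
    rw [h] at hdet
    have := inv_pos.mpr hdA
    simp [hdet] at this
  have hN0 : (C * B * C.conjTranspose).PosSemidef := hB.posSemidef.mul_mul_conjTranspose_same C
  have hNdet : (C * B * C.conjTranspose).det = B.det / A.det := by
    rw [Matrix.det_mul, Matrix.det_mul, Matrix.det_conjTranspose, div_eq_mul_inv, hdet]
    simp only [star_trivial]
    ring
  have hN : (C * B * C.conjTranspose).PosDef := by
    rw [hN0.posDef_iff_det_ne_zero, hNdet]
    positivity
  have htr : (C * B * C.conjTranspose).trace = (A⁻¹ * B).trace := by
    rw [hC, Matrix.trace_mul_comm, ← Matrix.mul_assoc]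
  have hu : IsUnit A.det := isUnit_iff_ne_zero.mpr hdA.ne'
  have h1 : (A⁻¹ * (A - B)).trace = d - (A⁻¹ * B).trace := by
    rw [Matrix.mul_sub, Matrix.nonsing_inv_mul _ hu, Matrix.trace_sub, Matrix.trace_one]
    simp
  have h2 : Real.log (A.det / B.det) = - Real.log (C * B * C.conjTranspose).det := by
    rw [hNdet, ← Real.log_inv, inv_div]
  rw [h1, h2, ← htr, hN.1.det_eq_prod_eigenvalues, hN.1.trace_eq_sum_eigenvalues]
  simp only [RCLike.ofReal_real_eq_id, id]
  rw [Real.log_prod (fun i _ => (hN.eigenvalues_pos i).ne')]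
  have h3 : ∑ i, Real.log (hN.1.eigenvalues i) ≤ ∑ i, (hN.1.eigenvalues i - 1) :=
    Finset.sum_le_sum fun i _ => Real.log_le_sub_one_of_pos (hN.eigenvalues_pos i)
  rw [Finset.sum_sub_distrib] at h3
  simp only [Finset.sum_const, Finset.card_univ, Fintype.card_fin, nsmul_eq_mul, mul_one] at h3
  linarith
end
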